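/- Let G = (𝒩, w) be a closed integer octagonal graph. Define w_t by w_t(i,ī) = 2⌊w(i,ī)/2⌋ for all i ∈ 𝒩 and w_t(i,j) = w(i,j) whenever j ≠ ī, and define w_T by w_T(i,j) = min{ w(i,j), ⌊w(i,ī)/2⌋ + ⌊w(j̄,j)/2⌋ }. If G_t = (𝒩, w_t) is consistent, then the strong closure w_t^S of G_t (the pointwise supremum of all strongly closed octagonal graphs ⊴ w_t) satisfies w_t^S(i,j) ≤ w_T(i,j) for all i, j ∈ 𝒩. -/

import Mathlib

/-- Extended rationals: ℚ ∪ {+∞}. -/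
abbrev Qinf := WithTop ℚ

/-- Weight of a path (list of nodes): sum of the weights of its arcs. -/
def pathWeight {N : Type*} (w : N → N → Qinf) : List N → Qinf
  | [] => 0
  | [_] => 0
  | a :: b :: l => w a b + pathWeight w (b :: l)

/-- A proper cycle: at least two arcs, first node equals last node,
    consecutive nodes distinct. -/
def IsProperCycle {N : Type*} (l : List N) : Prop :=
  3 ≤ l.length ∧ l.head? = l.getLast? ∧ l.Chain' (· ≠ ·)

/-- A graph is consistent if it has no proper cycle of negative weight. -/
def Consistent {N : Type*} (w : N → N → Qinf) : Prop :=
  ∀ l : List N, IsProperCycle l → 0 ≤ pathWeight w l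

/-- A consistent graph is closed if self-loops have weight 0 and the
    triangle inequality holds. -/
def ClosedG {N : Type*} (w : N → N → Qinf) : Prop :=
  Consistent w ∧ (∀ i, w i i = 0) ∧ ∀ i j k, w i j ≤ w i k + w k j

/-- The "bar" involution on nodes: ī = i+1 for even i, ī = i-1 for odd i. -/
def bar {n : ℕ} (i : Fin (2 * n)) : Fin (2 * n) :=
  if _h : i.val % 2 = 0 then ⟨i.val + 1, by have := i.isLt; omega⟩
  else ⟨i.val - 1, by have := i.isLt; omega⟩

/-- Coherence: w(i,j) = w(j̄,ī). -/
def Coherent {n : ℕ} (w : Fin (2 * n) → Fin (2 * n) → Qinf) : Prop :=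
  ∀ i j, w i j = w (bar j) (bar i)

/-- An octagonal graph: consistent and coherent. -/
def Octagonal {n : ℕ} (w : Fin (2 * n) → Fin (2 * n) → Qinf) : Prop :=
  Consistent w ∧ Coherent w

/-- Pointwise order on graphs. -/
def GLe {n : ℕ} (w₁ w₂ : Fin (2 * n) → Fin (2 * n) → Qinf) : Prop :=
  ∀ i j, w₁ i j ≤ w₂ i j

/-- Halving on ℚ∞ (with +∞/2 = +∞). -/
def half (x : Qinf) : Qinf := x.map (fun q => q / 2)

/-- Floored halving on ℚ∞ (with ⌊+∞/2⌋ = +∞). -/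
def fhalf (x : Qinf) : Qinf := x.map (fun q => ((⌊q / 2⌋ : ℤ) : ℚ))

/-- Integer weights: every weight is an integer or +∞. -/
def IntWeights {n : ℕ} (w : Fin (2 * n) → Fin (2 * n) → Qinf) : Prop :=
  ∀ i j, w i j = ⊤ ∨ ∃ d : ℤ, w i j = ((d : ℚ) : Qinf)

/-- A strongly closed octagonal graph. -/
def StronglyClosed {n : ℕ} (w : Fin (2 * n) → Fin (2 * n) → Qinf) : Prop :=
  Octagonal w ∧ ClosedG w ∧ ∀ i j, 2 * w i j ≤ w i (bar i) + w (bar j) j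

/-- A tightly closed integer octagonal graph. -/
def TightlyClosed {n : ℕ} (w : Fin (2 * n) → Fin (2 * n) → Qinf) : Prop :=
  IntWeights w ∧ StronglyClosed w ∧
    ∀ i, w i (bar i) = ⊤ ∨ ∃ d : ℤ, w i (bar i) = (((2 * d : ℤ) : ℚ) : Qinf)

/-!
Any strongly closed `w'` below the tightening of `w` satisfies
`2 w'(i,j) ≤ w'(i,ī) + w'(j̄,j) ≤ 2⌊w(i,ī)/2⌋ + 2⌊w(j̄,j)/2⌋`: both arcs on the right join a node to
its bar, so the tightening has already made them even and halving loses nothing.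
-/

theorem withTop_two_mul {R : Type*} [NonAssocSemiring R] [DecidableEq R] [NeZero (2 : R)]
    (x : WithTop R) : 2 * x = x + x := by
  cases x using WithTop.recTopCoe with
  | top => exact WithTop.mul_top (WithTop.coe_ne_zero.mpr two_ne_zero)
  | coe a => exact congrArg WithTop.some (two_mul a)

theorem withTop_le_of_add_self_le_add_self {α : Type*} [Add α] [LinearOrder α]
    [AddLeftStrictMono α] [AddRightStrictMono α] {x y : WithTop α} (h : x + x ≤ y + y) :
    x ≤ y := by
  contrapose! h
  exact WithTop.add_lt_add h h

theorem withTop_le_add_of_two_mul_le_two_mul_add_two_mul {R : Type*} [NonAssocSemiring R]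
    [LinearOrder R] [AddLeftStrictMono R] [NeZero (2 : R)] {x a b : WithTop R}
    (h : 2 * x ≤ 2 * a + 2 * b) : x ≤ a + b := by
  rw [withTop_two_mul, withTop_two_mul, withTop_two_mul, add_add_add_comm] at h
  exact withTop_le_of_add_self_le_add_self h

theorem two_mul_fhalf_le (x : Qinf) : 2 * fhalf x ≤ x := by
  cases x using WithTop.recTopCoe with
  | top => exact le_top
  | coe q =>
    have floor_bound : 2 * (⌊q / 2⌋ : ℚ) ≤ q := by linarith [Int.floor_le (q / 2)]
    exact WithTop.coe_le_coe.mpr floor_bound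

section Tightening

variable {n : ℕ}

theorem bar_involutive : Function.Involutive (bar (n := n)) := by
  intro i
  ext
  unfold bar
  grind

/-- The strong coherence inequality, which a closed octagonal graph must satisfy to be strongly
closed. -/
def StronglyCoherent (w : Fin (2 * n) → Fin (2 * n) → Qinf) : Prop :=
  ∀ i j, 2 * w i j ≤ w i (bar i) + w (bar j) j

/-- The tightening `w_t`: weights of the arcs from a node to its bar are rounded down to an even
integer. -/
def tightening (w : Fin (2 * n) → Fin (2 * n) → Qinf) (i j : Fin (2 * n)) : Qinf :=
  if j = bar i then 2 * fhalf (w i j) else w i j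

/-- The candidate tight closure `w_T`. -/
def tightCandidate (w : Fin (2 * n) → Fin (2 * n) → Qinf) (i j : Fin (2 * n)) : Qinf :=
  min (w i j) (fhalf (w i (bar i)) + fhalf (w (bar j) j))

theorem tightening_le (w : Fin (2 * n) → Fin (2 * n) → Qinf) : GLe (tightening w) w := by
  intro i j
  unfold tightening
  split_ifs
  · exact two_mul_fhalf_le _
  · exact le_rfl

theorem tightening_self_bar (w : Fin (2 * n) → Fin (2 * n) → Qinf) (i : Fin (2 * n)) :
    tightening w i (bar i) = 2 * fhalf (w i (bar i)) :=
  if_pos rfl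

theorem tightening_bar_self (w : Fin (2 * n) → Fin (2 * n) → Qinf) (j : Fin (2 * n)) :
    tightening w (bar j) j = 2 * fhalf (w (bar j) j) :=
  if_pos (bar_involutive j).symm

theorem StronglyCoherent.le_fhalf_add_fhalf {v w : Fin (2 * n) → Fin (2 * n) → Qinf}
    (hv : StronglyCoherent v) (hvw : GLe v (tightening w)) (i j : Fin (2 * n)) :
    v i j ≤ fhalf (w i (bar i)) + fhalf (w (bar j) j) := by
  apply withTop_le_add_of_two_mul_le_two_mul_add_two_mul
  calc
    2 * v i j ≤ v i (bar i) + v (bar j) j := hv i j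
    _ ≤ tightening w i (bar i) + tightening w (bar j) j := add_le_add (hvw _ _) (hvw _ _)
    _ = 2 * fhalf (w i (bar i)) + 2 * fhalf (w (bar j) j) := by
      rw [tightening_self_bar, tightening_bar_self]

theorem StronglyCoherent.le_tightCandidate {v w : Fin (2 * n) → Fin (2 * n) → Qinf}
    (hv : StronglyCoherent v) (hvw : GLe v (tightening w)) : GLe v (tightCandidate w) :=
  fun i j => le_min ((hvw i j).trans (tightening_le w i j)) (hv.le_fhalf_add_fhalf hvw i j)

theorem strong_closure_of_tightening_le_tight_candidate_general
    (w wtS : Fin (2 * n) → Fin (2 * n) → Qinf)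
    (hS : ∀ i j, IsLUB
      {q : Qinf | ∃ w' : Fin (2 * n) → Fin (2 * n) → Qinf,
        StronglyClosed w' ∧ GLe w' (tightening w) ∧ q = w' i j} (wtS i j)) :
    ∀ i j, wtS i j ≤ tightCandidate w i j := by
  intro i j
  refine (hS i j).2 ?_
  rintro _ ⟨w', ⟨_, _, hcoh⟩, hle, rfl⟩
  exact StronglyCoherent.le_tightCandidate hcoh hle i j

end Tightening

/-- The strong closure of the tightened graph is bounded above by
    the candidate tight closure. -/
theorem strong_closure_of_tightening_le_tight_candidate
    {n : ℕ} (hn : 1 ≤ n) (w : Fin (2 * n) → Fin (2 * n) → Qinf)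
    (hoct : Octagonal w) (hint : IntWeights w) (hcl : ClosedG w)
    (wt wT : Fin (2 * n) → Fin (2 * n) → Qinf)
    (hwt : ∀ i j, wt i j = if j = bar i then 2 * fhalf (w i j) else w i j)
    (hwT : ∀ i j, wT i j = min (w i j) (fhalf (w i (bar i)) + fhalf (w (bar j) j)))
    (hcons : Consistent wt)
    (wtS : Fin (2 * n) → Fin (2 * n) → Qinf)
    (hS : ∀ i j, IsLUB
      {q : Qinf | ∃ w' : Fin (2 * n) → Fin (2 * n) → Qinf,
        StronglyClosed w' ∧ GLe w' wt ∧ q = w' i j} (wtS i j)) :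
    ∀ i j, wtS i j ≤ wT i j := by
  obtain ⟨rfl, rfl⟩ : wt = tightening w ∧ wT = tightCandidate w := ⟨funext₂ hwt, funext₂ hwT⟩
  exact strong_closure_of_tightening_le_tight_candidate_general w wtS hS
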